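/- arXiv:2509.06492 — 10 statements merged into one kernel-verified Lean document; each statement's English description precedes it below -/
import Mathlib

section
/- Let f ∈ F[X] with deg f ≤ q^t−2 be such that f(α) ∈ B for every α ∈ F. Then for every i ∈ {0,1,…,q^t−2}, the coefficient of X^{(i·q mod (q^t−1))} in f equals the q-th power of the coefficient of X^i in f. -/
open Polynomial in
theorem stmt_2 (q t : ℕ) (hq : ∃ p m : ℕ, p.Prime ∧ 0 < m ∧ q = p ^ m) (ht : 1 ≤ t)
    (B F : Type) [Field B] [Fintype B] [Field F] [Fintype F] [Algebra B F]
    (hB : Fintype.card B = q) (hrank : Module.finrank B F = t)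
    (hF : Fintype.card F = q ^ t)
    (f : Polynomial F) (hdeg : f.natDegree ≤ q ^ t - 2)
    (hval : ∀ α : F, f.eval α ∈ Set.range (algebraMap B F)) :
    ∀ i : ℕ, i ≤ q ^ t - 2 →
      f.coeff (i * q % (q ^ t - 1)) = (f.coeff i) ^ q := by
  classical
  intro i hi
  have hcard : 1 < q ^ t := hF ▸ Fintype.one_lt_card
  obtain ⟨N, hN⟩ : ∃ N, N = q ^ t - 1 := ⟨_, rfl⟩
  have hN0 : 0 < N := by omega
  rw [← hN]
  have hiN : i < N := by omega
  have hfN : f.natDegree < N := by omega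
  have hcop : Nat.Coprime N q := by
    have h1 : Nat.Coprime N (q ^ t) := by
      have h2 : q ^ t = N + 1 := by omega
      rw [h2]; simp
    exact Nat.Coprime.coprime_dvd_right (dvd_pow_self q (by omega)) h1
  have hinj : ∀ a < N, ∀ b < N, a * q % N = b * q % N → a = b := by
    intro a ha b hb h
    have h3 : a ≡ b [MOD N] := Nat.ModEq.cancel_right_of_coprime hcop h
    exact Nat.ModEq.eq_of_lt_of_lt h3 ha hb
  let g : F[X] := ∑ j ∈ Finset.range N, C (f.coeff j ^ q) * X ^ (j * q % N)
  have hpowN : ∀ x : F, x ≠ 0 → x ^ N = 1 := by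
    intro x hx
    rw [hN, ← hF]
    exact FiniteField.pow_card_sub_one_eq_one x hx
  have heval : ∀ x : F, x ≠ 0 → g.eval x = f.eval x := by
    intro x hx
    have h1 : f.eval x ^ q = f.eval x := by
      obtain ⟨b, hb⟩ := hval x
      rw [← hb, ← map_pow, ← hB, FiniteField.pow_card]
    rw [← h1, eval_eq_sum_range' hfN x]
    have hfr : ∀ y : F, FiniteField.frobeniusAlgHom B F y = y ^ q := by
      intro y; simp [hB]
    rw [← hfr, map_sum, eval_finsetSum]
    refine Finset.sum_congr rfl fun j _ => ?_
    rw [hfr, mul_pow, ← pow_mul]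
    simp only [eval_mul, eval_C, eval_pow, eval_X]
    congr 1
    conv_rhs => rw [← Nat.mod_add_div (j * q) N, pow_add, pow_mul, hpowN x hx, one_pow, mul_one]
  have hgdeg : g.degree < N := by
    refine lt_of_le_of_lt (degree_sum_le _ _) ?_
    refine (Finset.sup_lt_iff (WithBot.bot_lt_coe N)).2 fun j _ => ?_
    refine lt_of_le_of_lt (degree_C_mul_X_pow_le _ _) ?_
    exact WithBot.coe_lt_coe.2 (Nat.mod_lt _ hN0)
  have hfdeg : f.degree < N := lt_of_le_of_lt degree_le_natDegree (by exact_mod_cast hfN)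
  have hgf : g = f := by
    have hs : (Finset.univ.erase (0 : F)).card = N := by
      rw [Finset.card_erase_of_mem (Finset.mem_univ _), Finset.card_univ, hF, hN]
    refine eq_of_degrees_lt_of_eval_finset_eq (Finset.univ.erase (0 : F)) ?_ ?_ ?_
    · rw [hs]; exact hgdeg
    · rw [hs]; exact hfdeg
    · intro x hx
      exact heval x (Finset.ne_of_mem_erase hx)
  have hc : g.coeff (i * q % N) = f.coeff i ^ q := by
    simp only [g, finsetSum_coeff, coeff_C_mul_X_pow]
    rw [Finset.sum_eq_single i]
    · simp
    · intro j hj hji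
      rw [if_neg]
      intro h
      exact hji (hinj j (Finset.mem_range.1 hj) i hiN h.symm)
    · intro h
      exact absurd (Finset.mem_range.2 hiN) h
  rw [← hc, hgf]
end

section
/- Fix k with 2 ≤ k ≤ q^t−2. Let f ∈ F[X] with deg f ≤ q^t−k, with the coefficients of X^0 and X^1 in f both equal to 0, and such that f(α) ∈ B for every α ∈ F. Then for every index i with nonzero coefficient in f, the entire cyclotomic coset of i modulo q^t−1 is contained in {2,3,…,q^t−k}, and moreover the coefficient of X^{(i·q mod (q^t−1))} in f equals the q-th power of the coefficient of X^i in f. -/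
/-- The cyclotomic coset of `i` modulo `q^t - 1` (with respect to `q`):
the orbit `{i * q^j mod (q^t - 1) : j ≥ 0}`. -/
def cycCoset (q t i : ℕ) : Set ℕ := {b : ℕ | ∃ j : ℕ, b = i * q ^ j % (q ^ t - 1)}

theorem stmt_3 (q t k : ℕ) (hq : ∃ p m : ℕ, p.Prime ∧ 0 < m ∧ q = p ^ m) (ht : 1 ≤ t)
    (hk2 : 2 ≤ k) (hk : k ≤ q ^ t - 2)
    (B F : Type) [Field B] [Fintype B] [Field F] [Fintype F] [Algebra B F]
    (hB : Fintype.card B = q) (hrank : Module.finrank B F = t)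
    (hF : Fintype.card F = q ^ t)
    (f : Polynomial F) (hdeg : f.natDegree ≤ q ^ t - k)
    (hc0 : f.coeff 0 = 0) (hc1 : f.coeff 1 = 0)
    (hval : ∀ α : F, f.eval α ∈ Set.range (algebraMap B F)) :
    ∀ i : ℕ, f.coeff i ≠ 0 →
      cycCoset q t i ⊆ Set.Icc 2 (q ^ t - k) ∧
      f.coeff (i * q % (q ^ t - 1)) = (f.coeff i) ^ q := by
  classical
  obtain ⟨n, hn⟩ : ∃ n, n = q ^ t - 1 := ⟨_, rfl⟩
  have hN : q ^ t = n + 1 := by omega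
  have hn3 : 3 ≤ n := by omega
  have hdn : f.natDegree < n := by omega
  rw [← hn]
  have hcop : Nat.Coprime n q := by
    have h1 : Nat.Coprime n (q ^ t) := by rw [hN]; simp
    exact Nat.Coprime.coprime_dvd_right (dvd_pow_self q (by omega)) h1
  have hinj : ∀ i < n, ∀ j < n, i * q % n = j * q % n → i = j := by
    intro i hi j hj h
    have h2 : i ≡ j [MOD n] := Nat.ModEq.cancel_right_of_coprime hcop h
    exact Nat.ModEq.eq_of_lt_of_lt h2 hi hj
  have hlt : ∀ i, f.coeff i ≠ 0 → i < n := fun i hi =>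
    lt_of_le_of_lt (Polynomial.le_natDegree_of_ne_zero hi) hdn
  let g : Polynomial F := ∑ i ∈ Finset.range n, Polynomial.monomial (i * q % n) (f.coeff i ^ q)
  have hpow : ∀ α : F, (f.eval α) ^ q = f.eval α := by
    intro α
    obtain ⟨b, hb⟩ := hval α
    rw [← hb, ← map_pow, ← hB, FiniteField.pow_card]
  have hone : ∀ α : F, α ≠ 0 → α ^ n = 1 := by
    intro α hα
    rw [hn, ← hF]
    exact FiniteField.pow_card_sub_one_eq_one α hα
  have hmod : ∀ α : F, α ≠ 0 → ∀ m, α ^ (m % n) = α ^ m := by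
    intro α hα m
    conv_rhs => rw [← Nat.mod_add_div m n, pow_add, pow_mul, hone α hα, one_pow, mul_one]
  have hge : ∀ α : F, α ≠ 0 → g.eval α = f.eval α := by
    intro α hα
    rw [← hpow α, Polynomial.eval_eq_sum_range' hdn]
    have hfr := map_sum (FiniteField.frobeniusAlgHom B F) (fun i => f.coeff i * α ^ i)
      (Finset.range n)
    simp only [FiniteField.coe_frobeniusAlgHom, hB] at hfr
    rw [hfr]
    simp only [g, Polynomial.eval_finset_sum, Polynomial.eval_monomial]
    refine Finset.sum_congr rfl fun i _ => ?_
    rw [hmod α hα, mul_pow, pow_mul]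
  have hgd : g.degree < n := by
    refine lt_of_le_of_lt (Polynomial.degree_sum_le _ _) ?_
    rw [Finset.sup_lt_iff (by exact WithBot.bot_lt_coe n)]
    intro i _
    refine lt_of_le_of_lt (Polynomial.degree_monomial_le _ _) ?_
    exact_mod_cast Nat.mod_lt _ (by omega)
  have hfd : f.degree < n :=
    lt_of_le_of_lt Polynomial.degree_le_natDegree (by exact_mod_cast hdn)
  have hfg : g = f := by
    have hcard : (Finset.univ.erase (0 : F)).card = n := by
      rw [Finset.card_erase_of_mem (Finset.mem_univ _), Finset.card_univ, hF, hn]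
    refine Polynomial.eq_of_degrees_lt_of_eval_finset_eq (Finset.univ.erase (0 : F)) ?_ ?_ ?_
    · rw [hcard]; exact hgd
    · rw [hcard]; exact hfd
    · intro α hα
      exact hge α (Finset.ne_of_mem_erase hα)
  have key : ∀ i < n, f.coeff (i * q % n) = f.coeff i ^ q := by
    intro i hi
    conv_lhs => rw [← hfg]
    simp only [g, Polynomial.finset_sum_coeff, Polynomial.coeff_monomial]
    rw [Finset.sum_eq_single i]
    · simp
    · intro j hj hji
      rw [if_neg]
      intro h
      exact hji (hinj j (Finset.mem_range.1 hj) i hi h)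
    · intro h
      exact absurd (Finset.mem_range.2 hi) h
  intro i hi
  refine ⟨?_, key i (hlt i hi)⟩
  have hall : ∀ j, f.coeff (i * q ^ j % n) ≠ 0 := by
    intro j
    induction j with
    | zero => simpa [Nat.mod_eq_of_lt (hlt i hi)] using hi
    | succ j ih =>
      have h := key _ (hlt _ ih)
      rw [Nat.mod_mul_mod, mul_assoc, ← pow_succ] at h
      rw [h]
      exact pow_ne_zero _ ih
  rintro b ⟨j, rfl⟩
  rw [← hn]
  have h := hall j
  refine ⟨?_, le_trans (Polynomial.le_natDegree_of_ne_zero h) hdeg⟩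
  by_contra hb
  have : i * q ^ j % n = 0 ∨ i * q ^ j % n = 1 := by omega
  rcases this with h' | h' <;> rw [h'] at h
  · exact h hc0
  · exact h hc1
end

section
/- Let C be a cyclotomic coset modulo q^t−1 of size s with representative a. Then the polynomials T_0^C, T_1^C, …, T_{s−1}^C are linearly independent over B in F[X]. -/
/-- The polynomial `T_ℓ^C(X) = Σ_{j=0}^{s-1} ω^{ℓ q^j} X^{a q^j mod (q^t - 1)}`,
for a cyclotomic coset `C` of size `s` with representative `a`. -/
noncomputable def Tpoly (F : Type) [Field F] (q t : ℕ) (ω : F) (a s ℓ : ℕ) : Polynomial F :=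
  ∑ j ∈ Finset.range s, Polynomial.C (ω ^ (ℓ * q ^ j)) * Polynomial.X ^ (a * q ^ j % (q ^ t - 1))

theorem cyc_le (q t a j : ℕ) (hj : 0 < j) (h : a * q ^ j % (q ^ t - 1) = a % (q ^ t - 1)) :
    (cycCoset q t a).ncard ≤ j := by
  have key : ∀ k r : ℕ, a * q ^ (j * k + r) % (q ^ t - 1) = a * q ^ r % (q ^ t - 1) := by
    intro k r
    induction k with
    | zero => simp
    | succ k ih =>
      rw [← ih]
      have h1 : a * q ^ (j * (k + 1) + r) = (a * q ^ j) * q ^ (j * k + r) := by ring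
      rw [h1]
      exact Nat.ModEq.mul_right _ h
  have hsub : cycCoset q t a ⊆
      (((Finset.range j).image (fun r => a * q ^ r % (q ^ t - 1)) : Finset ℕ) : Set ℕ) := by
    rintro b ⟨i, rfl⟩
    simp only [Finset.coe_image, Set.mem_image, Finset.coe_range, Set.mem_Iio]
    refine ⟨i % j, Nat.mod_lt _ hj, ?_⟩
    rw [← key (i / j) (i % j), Nat.div_add_mod]
  calc (cycCoset q t a).ncard ≤ _ := Set.ncard_le_ncard hsub (Finset.finite_toSet _)
    _ ≤ j := by
      rw [Set.ncard_coe_finset]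
      exact Finset.card_image_le.trans (by simp)

theorem stmt_5 (q t : ℕ) (hq : ∃ p m : ℕ, p.Prime ∧ 0 < m ∧ q = p ^ m) (ht : 1 ≤ t)
    (B F : Type) [Field B] [Fintype B] [Field F] [Fintype F] [Algebra B F]
    (hB : Fintype.card B = q) (hrank : Module.finrank B F = t)
    (hF : Fintype.card F = q ^ t)
    (ω : F) (hω : ∀ x : F, x ≠ 0 → ∃ j : ℕ, x = ω ^ j)
    (a s : ℕ) (ha : a ≤ q ^ t - 2) (hs : (cycCoset q t a).ncard = s) :
    LinearIndependent B (fun ℓ : Fin s => Tpoly F q t ω a s (ℓ : ℕ)) := by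
  have hst : s ≤ t := by
    rw [← hs]
    apply cyc_le q t a t ht
    have hpos : 0 < q ^ t := by rw [← hF]; exact Fintype.card_pos
    obtain ⟨n, hn⟩ : ∃ n, q ^ t = n + 1 := ⟨q ^ t - 1, by omega⟩
    rw [hn, Nat.add_sub_cancel, mul_add, mul_one, Nat.mul_add_mod_self_right]
  have hfin : FiniteDimensional B F := Module.Finite.of_finite
  have htop : IntermediateField.adjoin B {ω} = ⊤ := by
    rw [eq_top_iff]
    intro x _
    by_cases hx : x = 0
    · rw [hx]; exact zero_mem _
    · obtain ⟨j, rfl⟩ := hω x hx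
      exact pow_mem (IntermediateField.mem_adjoin_simple_self B ω) j
  have hdeg : (minpoly B ω).natDegree = t := by
    rw [← IntermediateField.adjoin.finrank (Algebra.IsIntegral.isIntegral ω), htop,
      IntermediateField.finrank_top', hrank]
  have hpow : LinearIndependent B (fun ℓ : Fin s => ω ^ (ℓ : ℕ)) :=
    (linearIndependent_pow (K := B) ω).comp (Fin.castLE (by omega)) (Fin.castLE_injective _)
  apply LinearIndependent.of_comp
    ((Polynomial.lcoeff F (a % (q ^ t - 1))).restrictScalars B)
  convert hpow using 1
  funext ℓ
  have hs0 : 0 < s := ℓ.pos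
  simp only [Function.comp, LinearMap.restrictScalars_apply, Polynomial.lcoeff_apply, Tpoly,
    Polynomial.finset_sum_coeff, Polynomial.coeff_C_mul, Polynomial.coeff_X_pow]
  rw [Finset.sum_eq_single 0]
  · simp
  · intro j hj hj0
    rw [if_neg, mul_zero]
    intro h
    have := cyc_le q t a j (Nat.pos_of_ne_zero hj0) h.symm
    rw [Finset.mem_range] at hj
    omega
  · intro h
    exact absurd (Finset.mem_range.2 hs0) h
end

section
/- Let C be a cyclotomic coset modulo q^t−1 of size s with representative a. Then for every c ∈ F, the polynomial Σ_{j=0}^{s−1} c^{q^j} · X^{(a·q^j mod (q^t−1))} lies in the B-span of {T_ℓ^C : 0 ≤ ℓ ≤ t−1} in F[X]. -/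
theorem stmt_7 (q t : ℕ) (hq : ∃ p m : ℕ, p.Prime ∧ 0 < m ∧ q = p ^ m) (ht : 1 ≤ t)
    (B F : Type) [Field B] [Fintype B] [Field F] [Fintype F] [Algebra B F]
    (hB : Fintype.card B = q) (hrank : Module.finrank B F = t)
    (hF : Fintype.card F = q ^ t)
    (ω : F) (hω : ∀ x : F, x ≠ 0 → ∃ j : ℕ, x = ω ^ j)
    (a s : ℕ) (ha : a ≤ q ^ t - 2) (hs : (cycCoset q t a).ncard = s) :
    ∀ c : F,
      (∑ j ∈ Finset.range s,
          Polynomial.C (c ^ q ^ j) * Polynomial.X ^ (a * q ^ j % (q ^ t - 1))) ∈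
        Submodule.span B
          {p : Polynomial F | ∃ ℓ : ℕ, ℓ ≤ t - 1 ∧ p = Tpoly F q t ω a s ℓ} := by
  classical
  let φ : F →ₗ[B] F := (FiniteField.frobeniusAlgHom B F).toLinearMap
  have hφ : ∀ (j : ℕ) (x : F), (φ ^ j) x = x ^ q ^ j := by
    intro j
    induction j with
    | zero => intro x; simp
    | succ n ih =>
      intro x
      rw [pow_succ, Module.End.mul_apply, ih]
      have h1 : φ x = x ^ q := by
        subst hB
        simp [φ]
      rw [h1, ← pow_mul, pow_succ, mul_comm]
  let L : F →ₗ[B] Polynomial F := ∑ j ∈ Finset.range s,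
    ((Polynomial.monomial (R := F) (a * q ^ j % (q ^ t - 1))).restrictScalars B) ∘ₗ (φ ^ j)
  have hL : ∀ x : F, L x = ∑ j ∈ Finset.range s,
      Polynomial.C (x ^ q ^ j) * Polynomial.X ^ (a * q ^ j % (q ^ t - 1)) := by
    intro x
    simp only [L, LinearMap.sum_apply, LinearMap.comp_apply, hφ, LinearMap.restrictScalars_apply,
      Polynomial.C_mul_X_pow_eq_monomial]
  intro c
  rw [← hL]
  by_cases hc : c = 0
  · rw [hc, map_zero]; exact Submodule.zero_mem _
  obtain ⟨k, rfl⟩ := hω c hc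
  have hint : IsIntegral B ω := IsIntegral.of_finite B ω
  have hm := minpoly.monic hint
  have hdeg : (minpoly B ω).natDegree ≤ t := hrank ▸ minpoly.natDegree_le ω
  have hlt : ((Polynomial.X ^ k : Polynomial B) %ₘ minpoly B ω).natDegree < t :=
    lt_of_lt_of_le (Polynomial.natDegree_modByMonic_lt _ hm (minpoly.ne_one B ω)) hdeg
  have e : ω ^ k = Polynomial.aeval ω ((Polynomial.X ^ k : Polynomial B) %ₘ minpoly B ω) := by
    rw [Polynomial.aeval_modByMonic_eq_self_of_root (minpoly.aeval B ω)]
    simp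
  rw [e, Polynomial.aeval_eq_sum_range' hlt, map_sum]
  refine Submodule.sum_mem _ fun i hi => ?_
  rw [map_smul]
  refine Submodule.smul_mem _ _ (Submodule.subset_span ⟨i, ?_, ?_⟩)
  · have := Finset.mem_range.1 hi
    omega
  · rw [hL, Tpoly]
    simp only [← pow_mul]
end

section
/- Let C_1, …, C_r be pairwise distinct cyclotomic cosets modulo q^t−1, with sizes s_1, …, s_r and representatives a_1, …, a_r. Then the family of polynomials {T_ℓ^{C_i} : 1 ≤ i ≤ r, 0 ≤ ℓ ≤ s_i−1} is linearly independent over B in F[X]. -/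
theorem coset_card_le {q t a j : ℕ} (hj : 0 < j)
    (h : a * q ^ j ≡ a [MOD (q ^ t - 1)]) : (cycCoset q t a).ncard ≤ j := by
  have key : ∀ n m, a * q ^ (m + j * n) ≡ a * q ^ m [MOD (q ^ t - 1)] := by
    intro n
    induction n with
    | zero => intro m; simp; rfl
    | succ n ih =>
      intro m
      have h1 := ih (m + j)
      have h2 : a * q ^ (m + j) ≡ a * q ^ m [MOD (q ^ t - 1)] := by
        have := h.mul_right (q ^ m)
        rw [show a * q ^ (m + j) = a * q ^ j * q ^ m by ring]
        exact this
      rw [show m + j * (n + 1) = m + j + j * n by ring]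
      exact h1.trans h2
  have hsub : cycCoset q t a ⊆
      ((Finset.range j).image (fun k => a * q ^ k % (q ^ t - 1)) : Finset ℕ) := by
    rintro b ⟨k, rfl⟩
    simp only [Finset.coe_image, Set.mem_image, Finset.coe_range, Set.mem_Iio]
    refine ⟨k % j, Nat.mod_lt _ hj, ?_⟩
    have := key (k / j) (k % j)
    rw [Nat.mod_add_div] at this
    exact this.symm
  refine (Set.ncard_le_ncard hsub (Finset.finite_toSet _)).trans ?_
  rw [Set.ncard_coe_finset]
  exact Finset.card_image_le.trans (by simp)

theorem pow_qt {q t : ℕ} (hq : 0 < q) (a n : ℕ) : a * (q ^ t) ^ n ≡ a [MOD (q ^ t - 1)] := by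
  have h1 : q ^ t ≡ 1 [MOD (q ^ t - 1)] := by
    have : 1 ≤ q ^ t := Nat.one_le_pow _ _ hq
    exact ((Nat.modEq_iff_dvd' this).2 dvd_rfl).symm
  simpa using (h1.pow n).mul_left a

theorem coset_sub {q t a b j : ℕ} (h : a ≡ b * q ^ j [MOD (q ^ t - 1)]) :
    cycCoset q t a ⊆ cycCoset q t b := by
  rintro c ⟨k, rfl⟩
  refine ⟨j + k, ?_⟩
  have := h.mul_right (q ^ k)
  rw [mul_assoc, ← pow_add] at this
  exact this

theorem coset_eq {q t a b j : ℕ} (hq : 0 < q) (ht : 1 ≤ t)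
    (h : a ≡ b * q ^ j [MOD (q ^ t - 1)]) :
    cycCoset q t a = cycCoset q t b := by
  refine (coset_sub h).antisymm (coset_sub (j := j * (t - 1)) ?_)
  have h1 := h.mul_right (q ^ (j * (t - 1)))
  have h2 : b * q ^ j * q ^ (j * (t - 1)) = b * (q ^ t) ^ j := by
    rw [mul_assoc, ← pow_add, ← pow_mul]
    congr 2
    obtain ⟨u, rfl⟩ := Nat.exists_eq_add_of_le ht
    simp; ring
  rw [h2] at h1
  exact (h1.trans (pow_qt hq b j)).symm

theorem pow_indep (B F : Type) [Field B] [Field F] [Fintype F] [Algebra B F]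
    (ω : F) (hω : ∀ x : F, x ≠ 0 → ∃ j : ℕ, x = ω ^ j) (s : ℕ)
    (hs : s ≤ Module.finrank B F) :
    LinearIndependent B (fun l : Fin s => ω ^ (l : ℕ)) := by
  have htop : IntermediateField.adjoin B {ω} = ⊤ := by
    rw [eq_top_iff]
    rintro x -
    by_cases hx : x = 0
    · rw [hx]; exact zero_mem _
    · obtain ⟨j, rfl⟩ := hω x hx
      exact pow_mem (IntermediateField.mem_adjoin_simple_self B ω) j
  have : Module.Finite B F := Module.Finite.of_finite
  have hd : (minpoly B ω).natDegree = Module.finrank B F := by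
    rw [← IntermediateField.adjoin.finrank (Algebra.IsIntegral.isIntegral ω), htop,
      IntermediateField.finrank_top']
  have h := (linearIndependent_pow (K := B) ω)
  exact h.comp (Fin.castLE (hd ▸ hs)) (Fin.castLE_injective _)

theorem stmt_8 (q t : ℕ) (hq : ∃ p m : ℕ, p.Prime ∧ 0 < m ∧ q = p ^ m) (ht : 1 ≤ t)
    (B F : Type) [Field B] [Fintype B] [Field F] [Fintype F] [Algebra B F]
    (hB : Fintype.card B = q) (hrank : Module.finrank B F = t)
    (hF : Fintype.card F = q ^ t)
    (ω : F) (hω : ∀ x : F, x ≠ 0 → ∃ j : ℕ, x = ω ^ j)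
    (r : ℕ) (a s : Fin r → ℕ)
    (ha : ∀ i, a i ≤ q ^ t - 2)
    (hs : ∀ i, (cycCoset q t (a i)).ncard = s i)
    (hdist : ∀ i j, i ≠ j → cycCoset q t (a i) ≠ cycCoset q t (a j)) :
    LinearIndependent B
      (fun p : (Σ i : Fin r, Fin (s i)) => Tpoly F q t ω (a p.1) (s p.1) (p.2 : ℕ)) := by
  classical
  have hq0 : 0 < q := by
    obtain ⟨p, m, hp, hm, rfl⟩ := hq
    exact pow_pos hp.pos m
  have hqt : 2 ≤ q ^ t := by
    rw [← hF]; exact Fintype.one_lt_card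
  have hst : ∀ i, s i ≤ t := fun i => by
    rw [← hs i]
    exact coset_card_le (by omega) (by simpa using pow_qt hq0 (a i) 1)
  have hmod : ∀ i, a i % (q ^ t - 1) = a i := fun i =>
    Nat.mod_eq_of_lt (by have := ha i; omega)
  have hoff : ∀ i k (l : ℕ), i ≠ k → (Tpoly F q t ω (a k) (s k) l).coeff (a i) = 0 := by
    intro i k l hik
    unfold Tpoly
    rw [Polynomial.finsetSum_coeff]
    refine Finset.sum_eq_zero fun j _ => ?_
    rw [Polynomial.coeff_C_mul_X_pow, if_neg]
    intro h
    refine hdist i k hik (coset_eq (j := j) hq0 ht ?_)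
    exact (hmod i).trans h
  have hon : ∀ i (l : Fin (s i)), (Tpoly F q t ω (a i) (s i) l).coeff (a i) = ω ^ (l : ℕ) := by
    intro i l
    unfold Tpoly
    rw [Polynomial.finsetSum_coeff, Finset.sum_eq_single 0]
    · rw [Polynomial.coeff_C_mul_X_pow]; simp [hmod i]
    · intro j hj hj0
      rw [Polynomial.coeff_C_mul_X_pow, if_neg]
      intro h
      have h1 := coset_card_le (q := q) (t := t) (a := a i) (Nat.pos_of_ne_zero hj0)
        (h.symm.trans (hmod i).symm)
      rw [hs i] at h1
      have := Finset.mem_range.1 hj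
      omega
    · intro h
      exact absurd (Finset.mem_range.2 (by have := l.2; omega)) h
  rw [Fintype.linearIndependent_iff]
  rintro g hg ⟨i, l⟩
  have hc := congrArg (fun p : Polynomial F => p.coeff (a i)) hg
  simp only [Polynomial.finsetSum_coeff, Polynomial.coeff_smul, Polynomial.coeff_zero,
    Fintype.sum_sigma] at hc
  rw [Finset.sum_eq_single i] at hc
  · simp only [hon] at hc
    exact Fintype.linearIndependent_iff.1 (pow_indep B F ω hω (s i) (hrank ▸ hst i))
      (fun l => g ⟨i, l⟩) hc l
  · intro k _ hk
    refine Finset.sum_eq_zero fun l _ => ?_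
    rw [hoff i k l hk.symm, smul_zero]
  · intro h
    exact absurd (Finset.mem_univ i) h
end

section
/- Fix k with 2 ≤ k ≤ q^t. The set F_k = {f ∈ F[X] : deg f ≤ q^t−k, the coefficients of X^0 and X^1 in f are 0, and f(α) ∈ B for all α ∈ F} is a B-submodule of F[X], and its dimension over B equals Σ_{C ∈ Ξ_k^*} |C|. -/
/-- `Ξ_k^*`: the collection of cyclotomic cosets modulo `q^t - 1` all of whose
elements lie in `{2, 3, …, q^t - k}`. -/
def XiStar (q t k : ℕ) : Set (Set ℕ) :=
  {C : Set ℕ | (∃ i : ℕ, i ≤ q ^ t - 2 ∧ C = cycCoset q t i) ∧ C ⊆ Set.Icc 2 (q ^ t - k)}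

lemma aux_range (q : ℕ) (B F : Type) [Field B] [Fintype B] [Field F] [Fintype F] [Algebra B F]
    (hB : Fintype.card B = q) (x : F) :
    x ∈ Set.range (algebraMap B F) ↔ x ^ q = x := by
  subst hB
  rw [IsGalois.mem_range_algebraMap_iff_fixed]
  constructor
  · intro h
    exact h (FiniteField.frobeniusAlgEquivOfAlgebraic B F)
  · intro h g
    obtain ⟨j, rfl⟩ := (FiniteField.bijective_frobeniusAlgEquivOfAlgebraic_pow B F).2 g
    simp only [AlgEquiv.coe_pow]
    exact Function.iterate_fixed (f := FiniteField.frobeniusAlgEquivOfAlgebraic B F) h _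

lemma aux_normal (q t : ℕ) (B F : Type) [Field B] [Fintype B] [Field F] [Fintype F] [Algebra B F]
    (hB : Fintype.card B = q) (hrank : Module.finrank B F = t) :
    ∃ (θ : F) (l : F →ₗ[B] B), (∀ x : F, (∀ m : ℕ, l (x ^ (q ^ m)) = 0) → x = 0) ∧
      ∀ j < t, l (θ ^ (q ^ j)) = if j = 0 then 1 else 0 := by
  classical
  subst hB hrank
  set φ := FiniteField.frobeniusAlgEquivOfAlgebraic B F with hφ
  have hpow : ∀ (m : ℕ) (x : F), (φ ^ m) x = x ^ (Fintype.card B ^ m) := by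
    intro m x
    rw [AlgEquiv.coe_pow, FiniteField.coe_frobeniusAlgEquivOfAlgebraic_iterate]
  let b := IsGalois.normalBasis B F
  have hb : ∀ g h : Gal(F/B), g (b h) = b (g * h) := by
    intro g h
    simp only [b]
    rw [IsGalois.normalBasis_apply h, IsGalois.normalBasis_apply (g * h)]; rfl
  refine ⟨b 1, b.coord 1, ?_, ?_⟩
  · intro x hx
    have hg : ∀ g : Gal(F/B), b.coord 1 ∘ₗ g.toLinearMap = b.coord g⁻¹ := by
      intro g
      apply b.ext
      intro h
      simp only [LinearMap.comp_apply, AlgEquiv.toLinearMap_apply, hb, Module.Basis.coord_apply,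
        Module.Basis.repr_self, Finsupp.single_apply]
      simp [mul_eq_one_iff_inv_eq, eq_comm]
    apply b.ext_elem
    intro g
    obtain ⟨j, hj⟩ := (FiniteField.bijective_frobeniusAlgEquivOfAlgebraic_pow B F).2 g⁻¹
    have h1 := hx j
    rw [← hpow] at h1
    have h2 := LinearMap.congr_fun (hg (φ ^ (j:ℕ))) x
    simp only [LinearMap.comp_apply, AlgEquiv.toLinearMap_apply, h1] at h2
    simp only at hj
    rw [hφ, hj, inv_inv] at h2
    simpa using h2.symm
  · intro j hj
    rw [← hpow, hb, mul_one, Module.Basis.coord_apply, Module.Basis.repr_self, Finsupp.single_apply]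
    congr 1
    rw [eq_iff_iff]
    constructor
    · intro h
      have := @(FiniteField.bijective_frobeniusAlgEquivOfAlgebraic_pow B F).1 ⟨j, hj⟩
        ⟨0, Module.finrank_pos⟩ (by simpa using h)
      simpa using this
    · rintro rfl; simp

lemma aux_per (q t j : ℕ) (hn : 1 ≤ q ^ t) : q ^ (t * j) ≡ 1 [MOD (q ^ t - 1)] := by
  have : q ^ t ≡ 1 [MOD (q ^ t - 1)] := by
    have := (Nat.modEq_iff_dvd' (n := q ^ t - 1) hn).2 dvd_rfl
    exact this.symm
  simpa [pow_mul] using this.pow j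

lemma aux_coset (q t i m : ℕ) (ht : 1 ≤ t) (hn : 1 ≤ q ^ t) (hm : m ∈ cycCoset q t i) :
    cycCoset q t m = cycCoset q t i := by
  obtain ⟨j, rfl⟩ := hm
  ext b
  constructor
  · rintro ⟨l, rfl⟩
    exact ⟨j + l, by rw [Nat.mod_mul_mod, pow_add, mul_assoc]⟩
  · rintro ⟨l, rfl⟩
    refine ⟨(t - 1) * j + l, ?_⟩
    rw [Nat.mod_mul_mod]
    obtain ⟨s, rfl⟩ : ∃ s, t = s + 1 := ⟨t - 1, by omega⟩
    have := (aux_per q (s+1) j hn).mul_left (i * q ^ l)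
    rw [mul_one] at this
    refine this.symm.trans ?_
    rw [show s + 1 - 1 = s by omega]
    apply congrArg (· % _)
    ring

lemma aux_sum (q t k : ℕ) (ht : 1 ≤ t) (hq : 2 ≤ q ^ t) :
    ∑ᶠ C ∈ XiStar q t k, C.ncard =
      Set.ncard {i | i < q ^ t - 1 ∧ cycCoset q t i ⊆ Set.Icc 2 (q ^ t - k)} := by
  have hU : ⋃₀ XiStar q t k = {i | i < q ^ t - 1 ∧ cycCoset q t i ⊆ Set.Icc 2 (q ^ t - k)} := by
    ext i
    constructor
    · rintro ⟨C, ⟨⟨i', hi', rfl⟩, hC⟩, hi⟩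
      refine ⟨?_, by rwa [aux_coset q t i' i ht (by omega) hi]⟩
      obtain ⟨j, rfl⟩ := hi
      exact Nat.mod_lt _ (by omega)
    · rintro ⟨hi, hC⟩
      exact ⟨_, ⟨⟨i, by omega, rfl⟩, hC⟩, 0, by simp [Nat.mod_eq_of_lt hi]⟩
  have hfin : ∀ C ∈ XiStar q t k, C.Finite := fun C hC => (Set.finite_Icc _ _).subset hC.2
  have hfin' : (XiStar q t k).Finite :=
    (Set.finite_Icc 2 (q ^ t - k)).finite_subsets.subset fun C hC => hC.2
  rw [← hU, Set.sUnion_eq_biUnion, hfin'.ncard_biUnion hfin]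
  rintro C ⟨⟨i, hi, rfl⟩, hC⟩ D ⟨⟨i', hi', rfl⟩, hD⟩ hne
  rw [Function.onFun, Set.disjoint_left]
  intro m h1 h2
  exact hne ((aux_coset q t i m ht (by omega) h1).symm.trans (aux_coset q t i' m ht (by omega) h2))

lemma aux_inj (q t i i' : ℕ) (ht : 1 ≤ t) (hn : 1 ≤ q ^ t) (hi : i < q ^ t - 1)
    (hi' : i' < q ^ t - 1) (h : i * q % (q ^ t - 1) = i' * q % (q ^ t - 1)) : i = i' := by
  obtain ⟨s, rfl⟩ : ∃ s, t = s + 1 := ⟨t - 1, by omega⟩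
  have hp := aux_per q (s + 1) 1 hn
  rw [mul_one] at hp
  have h1 : i * q ≡ i' * q [MOD (q ^ (s + 1) - 1)] := h
  have h2 := h1.mul_right (q ^ s)
  rw [mul_assoc, mul_assoc, ← pow_succ'] at h2
  have h3 : i ≡ i' [MOD (q ^ (s + 1) - 1)] := by
    have e1 := hp.mul_left i
    have e2 := hp.mul_left i'
    rw [mul_one] at e1 e2
    exact (e1.symm.trans h2).trans e2
  exact h3.eq_of_lt_of_lt hi hi'

lemma aux_surj (q t m : ℕ) (ht : 1 ≤ t) (hn : 1 ≤ q ^ t) (hm : m < q ^ t - 1) :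
    ∃ i < q ^ t - 1, i * q % (q ^ t - 1) = m := by
  refine ⟨m * q ^ (t - 1) % (q ^ t - 1), Nat.mod_lt _ (by omega), ?_⟩
  rw [Nat.mod_mul_mod]
  obtain ⟨s, rfl⟩ : ∃ s, t = s + 1 := ⟨t - 1, by omega⟩
  have := (aux_per q (s + 1) 1 hn).mul_left m
  rw [mul_one, mul_one] at this
  rw [show s + 1 - 1 = s by omega, mul_assoc, ← pow_succ]
  exact Eq.trans this (Nat.mod_eq_of_lt hm)

lemma aux_pow (q t : ℕ) (ht : 1 ≤ t) (hq : 2 ≤ q ^ t) (F : Type) [Field F] [Fintype F]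
    (hF : Fintype.card F = q ^ t) (α : F) (i : ℕ) (hi : i < q ^ t - 1) :
    α ^ (i * q % (q ^ t - 1)) = α ^ (i * q) := by
  have hq0 : q ≠ 0 := by rintro rfl; rw [zero_pow (by omega)] at hq; omega
  by_cases hα : α = 0
  · subst hα
    rcases Nat.eq_zero_or_pos i with rfl | hi0
    · simp
    · have : i * q % (q ^ t - 1) ≠ 0 := by
        intro h
        have := aux_inj q t i 0 ht (by omega) hi (by omega) (by simpa using h)
        omega
      rw [zero_pow this, zero_pow (by positivity)]
  · have h1 : α ^ (q ^ t - 1) = 1 := by rw [← hF]; exact FiniteField.pow_card_sub_one_eq_one α hα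
    conv_rhs => rw [← Nat.mod_add_div (i * q) (q ^ t - 1)]
    rw [pow_add, pow_mul, h1, one_pow, mul_one]

open Polynomial in
lemma aux_main (q t : ℕ) (ht : 1 ≤ t) (hq : 2 ≤ q ^ t)
    (B F : Type) [Field B] [Fintype B] [Field F] [Fintype F] [Algebra B F]
    (hB : Fintype.card B = q) (hF : Fintype.card F = q ^ t) (f : F[X])
    (hf : f.natDegree < q ^ t - 1) :
    (∀ α : F, f.eval α ∈ Set.range (algebraMap B F)) ↔
      ∀ i < q ^ t - 1, f.coeff (i * q % (q ^ t - 1)) = f.coeff i ^ q := by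
  classical
  set n := q ^ t - 1 with hn
  let g : F[X] := ∑ i ∈ Finset.range n, monomial (i * q % n) (f.coeff i ^ q)
  have hge : ∀ α, g.eval α = f.eval α ^ q := by
    intro α
    rw [eval_eq_sum_range' hf]
    have : ∀ x : F, x ^ q = FiniteField.frobeniusAlgHom B F x := by
      intro x; rw [FiniteField.coe_frobeniusAlgHom, hB]
    rw [this, map_sum, eval_finset_sum]
    refine Finset.sum_congr rfl fun i hi => ?_
    rw [← this, eval_monomial, aux_pow q t ht hq F hF α i (by simpa using hi), mul_pow, pow_mul]
  have hgc : ∀ i < n, g.coeff (i * q % n) = f.coeff i ^ q := by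
    intro i hi
    simp only [g, finset_sum_coeff, coeff_monomial]
    rw [Finset.sum_eq_single i]
    · simp
    · intro b hb hne
      rw [if_neg]
      intro h
      exact hne (aux_inj q t b i ht (by omega) (by simpa using hb) hi h)
    · intro h; simp at h; omega
  have hgd : ∀ m, n ≤ m → g.coeff m = 0 := by
    intro m hm
    simp only [g, finset_sum_coeff, coeff_monomial]
    refine Finset.sum_eq_zero fun i hi => ?_
    rw [if_neg]
    have : i * q % n < n := Nat.mod_lt _ (by omega)
    omega
  have key : (∀ α : F, f.eval α ∈ Set.range (algebraMap B F)) ↔ g = f := by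
    simp only [aux_range q B F hB, ← hge]
    constructor
    · intro h
      refine Polynomial.eq_of_degrees_lt_of_eval_finset_eq (Finset.univ : Finset F) ?_ ?_
        fun x _ => h x
      · rw [degree_lt_iff_coeff_zero]
        intro m hm
        apply hgd
        rw [Finset.card_univ, hF] at hm
        omega
      · rw [degree_lt_iff_coeff_zero]
        intro m hm
        apply coeff_eq_zero_of_natDegree_lt
        rw [Finset.card_univ, hF] at hm
        omega
    · intro h α; rw [h]
  rw [key]
  constructor
  · intro h i hi
    rw [← hgc i hi, h]
  · intro h
    ext m
    rcases lt_or_ge m n with hm | hm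
    · obtain ⟨i, hi, rfl⟩ := aux_surj q t m ht (by omega) hm
      rw [hgc i hi, h i hi]
    · rw [hgd m hm, coeff_eq_zero_of_natDegree_lt (by omega)]

theorem stmt_9 (q t k : ℕ) (hq : ∃ p m : ℕ, p.Prime ∧ 0 < m ∧ q = p ^ m) (ht : 1 ≤ t)
    (hk2 : 2 ≤ k) (hk : k ≤ q ^ t)
    (B F : Type) [Field B] [Fintype B] [Field F] [Fintype F] [Algebra B F]
    (hB : Fintype.card B = q) (hrank : Module.finrank B F = t)
    (hF : Fintype.card F = q ^ t) :
    ∃ Fk : Submodule B (Polynomial F),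
      (Fk : Set (Polynomial F)) =
        {f : Polynomial F | f.natDegree ≤ q ^ t - k ∧ f.coeff 0 = 0 ∧ f.coeff 1 = 0 ∧
          ∀ α : F, f.eval α ∈ Set.range (algebraMap B F)} ∧
      Module.finrank B Fk = ∑ᶠ C ∈ XiStar q t k, C.ncard := by
  classical
  have hq2 : 2 ≤ q ^ t := by omega
  set n := q ^ t - 1 with hn
  let Fk : Submodule B (Polynomial F) :=
    { carrier := {f : Polynomial F | f.natDegree ≤ q ^ t - k ∧ f.coeff 0 = 0 ∧ f.coeff 1 = 0 ∧
          ∀ α : F, f.eval α ∈ Set.range (algebraMap B F)}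
      add_mem' := by
        rintro f g ⟨h1, h2, h3, h4⟩ ⟨g1, g2, g3, g4⟩
        refine ⟨(Polynomial.natDegree_add_le _ _).trans (max_le h1 g1), by simp [h2, g2],
          by simp [h3, g3], fun α => ?_⟩
        obtain ⟨x, hx⟩ := h4 α
        obtain ⟨y, hy⟩ := g4 α
        exact ⟨x + y, by simp [hx, hy]⟩
      zero_mem' := ⟨by simp, by simp, by simp, fun α => ⟨0, by simp⟩⟩
      smul_mem' := by
        rintro c f ⟨h1, h2, h3, h4⟩
        refine ⟨(Polynomial.natDegree_smul_le _ _).trans h1, by simp [h2],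
          by simp [h3], fun α => ?_⟩
        obtain ⟨x, hx⟩ := h4 α
        exact ⟨c * x, by rw [map_mul, hx, Polynomial.eval_smul, Algebra.smul_def]⟩ }
  refine ⟨Fk, rfl, ?_⟩
  have hmem : ∀ f, f ∈ Fk ↔ f.natDegree ≤ q ^ t - k ∧ f.coeff 0 = 0 ∧ f.coeff 1 = 0 ∧
      ∀ i < n, f.coeff (i * q % n) = f.coeff i ^ q := by
    intro f
    constructor
    · rintro ⟨h1, h2, h3, h4⟩
      exact ⟨h1, h2, h3, (aux_main q t ht hq2 B F hB hF f (by omega)).1 h4⟩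
    · rintro ⟨h1, h2, h3, h4⟩
      exact ⟨h1, h2, h3, (aux_main q t ht hq2 B F hB hF f (by omega)).2 h4⟩
  rw [aux_sum q t k ht hq2]
  set S : Set ℕ := {i | i < q ^ t - 1 ∧ cycCoset q t i ⊆ Set.Icc 2 (q ^ t - k)} with hS
  have hSfin : S.Finite := (Set.finite_lt_nat n).subset fun i hi => hi.1
  haveI : Fintype S := hSfin.fintype
  obtain ⟨θ, l, hl1, hl2⟩ := aux_normal q t B F hB hrank
  have hSmul : ∀ i j, i ∈ S → i * q ^ j % n ∈ S := by
    intro i j hi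
    refine ⟨Nat.mod_lt _ (by omega), ?_⟩
    rw [aux_coset q t i _ ht (by omega) ⟨j, rfl⟩]
    exact hi.2
  have hSmul' : ∀ i j, i < n → i * q ^ j % n ∈ S → i ∈ S := by
    intro i j hi h
    refine ⟨hi, ?_⟩
    rw [← aux_coset q t i _ ht (by omega) ⟨j, rfl⟩]
    exact h.2
  have hpow : ∀ f ∈ Fk, ∀ i < n, ∀ m, f.coeff (i * q ^ m % n) = f.coeff i ^ (q ^ m) := by
    intro f hf i hi m
    induction m with
    | zero => simp [Nat.mod_eq_of_lt hi]
    | succ m ih =>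
      have := ((hmem f).1 hf).2.2.2 (i * q ^ m % n) (Nat.mod_lt _ (by omega))
      rw [ih, Nat.mod_mul_mod, mul_assoc, ← pow_succ, ← pow_mul, ← pow_succ] at this
      exact this
  have hsupp : ∀ f ∈ Fk, ∀ i, i ∉ S → f.coeff i = 0 := by
    intro f hf i hi
    by_contra hne
    obtain ⟨h1, h2, h3, h4⟩ := (hmem f).1 hf
    have hin : i < n := by
      have := Polynomial.le_natDegree_of_ne_zero hne
      omega
    refine hi ⟨hin, ?_⟩
    rintro b ⟨j, rfl⟩
    have hb := hpow f hf i hin j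
    have hb0 : f.coeff (i * q ^ j % n) ≠ 0 := by rw [hb]; exact pow_ne_zero _ hne
    refine ⟨?_, (Polynomial.le_natDegree_of_ne_zero hb0).trans h1⟩
    change 2 ≤ i * q ^ j % n
    generalize i * q ^ j % n = b at hb0
    by_contra hlt
    interval_cases b
    · exact hb0 h2
    · exact hb0 h3
  let L : Fk →ₗ[B] (S → B) :=
    { toFun := fun f i => l (f.1.coeff i)
      map_add' := by intro f g; ext i; simp
      map_smul' := by intro c f; ext i; simp }
  have hLinj : Function.Injective L := by
    rw [injective_iff_map_eq_zero]
    intro f hf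
    apply Subtype.ext
    ext i
    by_cases hi : i ∈ S
    · apply hl1
      intro m
      rw [← hpow f.1 f.2 i hi.1 m]
      exact congrFun hf ⟨_, hSmul i m hi⟩
    · exact hsupp f.1 f.2 i hi
  have hLsurj : Function.Surjective L := by
    intro c
    let c' : ℕ → B := fun m => if h : m ∈ S then c ⟨m, h⟩ else 0
    let A : ℕ → F := fun i => ∑ j ∈ Finset.range t, c' (i * q ^ (t - j) % n) • θ ^ (q ^ j)
    let f : Polynomial F := ∑ i ∈ Finset.range n, Polynomial.monomial i (A i)
    have hfc : ∀ i, f.coeff i = if i < n then A i else 0 := by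
      intro i
      simp only [f, Polynomial.finset_sum_coeff, Polynomial.coeff_monomial]
      simp
    have hA0 : ∀ i < n, i ∉ S → A i = 0 := by
      intro i hi hiS
      refine Finset.sum_eq_zero fun j _ => ?_
      have : c' (i * q ^ (t - j) % n) = 0 := dif_neg fun h => hiS (hSmul' i _ hi h)
      rw [this, zero_smul]
    have hfS : ∀ i, i ∉ S → f.coeff i = 0 := by
      intro i hi
      rw [hfc]
      split_ifs with h
      · exact hA0 i h hi
      · rfl
    have hSI : ∀ i ∈ S, i ∈ Set.Icc 2 (q ^ t - k) := fun i hi =>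
      hi.2 ⟨0, by simp [Nat.mod_eq_of_lt hi.1]⟩
    have hfF : f ∈ Fk := by
      rw [hmem]
      refine ⟨?_, hfS 0 fun h => by simpa using (hSI 0 h).1, hfS 1 fun h => by simpa using (hSI 1 h).1, ?_⟩
      · rw [Polynomial.natDegree_le_iff_coeff_eq_zero]
        intro N hN
        exact hfS N fun h => by have := (hSI N h).2; omega
      · intro i hi
        have hlt : i * q % n < n := Nat.mod_lt _ (by omega)
        rw [hfc, hfc, if_pos hi, if_pos hlt]
        have hfr : ∀ x : F, x ^ q = FiniteField.frobeniusAlgHom B F x := by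
          intro x; rw [FiniteField.coe_frobeniusAlgHom, hB]
        let h : ℕ → F := fun j => c' (i * q ^ (t + 1 - j) % n) • θ ^ (q ^ j)
        have e1 : A (i * q % n) = ∑ j ∈ Finset.range t, h j := by
          refine Finset.sum_congr rfl fun j hj => ?_
          have : j < t := by simpa using hj
          simp only [h]
          rw [Nat.mod_mul_mod, mul_assoc, ← pow_succ', show t - j + 1 = t + 1 - j by omega]
        have e2 : A i ^ q = ∑ j ∈ Finset.range t, h (j + 1) := by
          rw [hfr, map_sum]
          refine Finset.sum_congr rfl fun j hj => ?_
          simp only [h]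
          rw [map_smul, ← hfr, ← pow_mul, ← pow_succ, Nat.add_sub_add_right]
        have e3 : h 0 = h t := by
          simp only [h]
          rw [← hF, FiniteField.pow_card, show t + 1 - t = 1 by omega, pow_zero, pow_one, pow_one,
            Nat.sub_zero]
          congr 2
          have := (aux_per q t 1 (by omega)).mul_left (i * q)
          rw [mul_one, mul_one, mul_assoc, ← pow_succ'] at this
          exact this
        rw [e1, e2]
        have := (Finset.sum_range_succ h t).symm.trans (Finset.sum_range_succ' h t)
        rw [e3] at this
        exact add_right_cancel this
    refine ⟨⟨f, hfF⟩, ?_⟩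
    ext ⟨i, hi⟩
    change l (f.coeff i) = _
    rw [hfc, if_pos hi.1, map_sum, Finset.sum_eq_single 0]
    · rw [map_smul, hl2 0 (by omega), if_pos rfl, smul_eq_mul, mul_one, Nat.sub_zero]
      have : i * q ^ t % n = i := by
        have := (aux_per q t 1 (by omega)).mul_left i
        rw [mul_one, mul_one] at this
        exact Eq.trans this (Nat.mod_eq_of_lt hi.1)
      rw [this]
      exact dif_pos hi
    · intro j hj hne
      rw [map_smul, hl2 j (by simpa using hj), if_neg hne, smul_zero]
    · intro h; simp at h; omega
  rw [(LinearEquiv.ofBijective L ⟨hLinj, hLsurj⟩).finrank_eq, Module.finrank_fintype_fun_eq_card,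
    ← Nat.card_eq_fintype_card]
  rfl
end

section
/- Fix k with 2 ≤ k ≤ q^t. Then the dimension of W_k as a vector space over B equals Σ_{C ∈ Ξ_k^*} |C|. -/
/-- The set `W_k` of vectors `c = (c_α)_{α ∈ F}` lying in the dual of `RS(F, k)`,
with `c_0 = 0` and `α · c_α ∈ B` for every `α ≠ 0`. -/
def WkSet (B F : Type) [Field B] [Field F] [Fintype F] [Algebra B F] (k : ℕ) :
    Set (F → F) :=
  {c : F → F |
    (∀ f : Polynomial F, f.degree < (k : WithBot ℕ) → ∑ α : F, c α * f.eval α = 0) ∧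
    c 0 = 0 ∧
    ∀ α : F, α ≠ 0 → ∃ b : B, α * c α = algebraMap B F b}

lemma aux_coset_eq {q t i b : ℕ} (hq : 1 ≤ q) (ht : 1 ≤ t) (hb : b ∈ cycCoset q t i) :
    cycCoset q t b = cycCoset q t i := by
  obtain ⟨j, rfl⟩ := hb
  have h1 : q ^ t ≡ 1 [MOD (q ^ t - 1)] :=
    ((Nat.modEq_iff_dvd' (Nat.one_le_pow _ _ hq)).2 dvd_rfl).symm
  obtain ⟨s, rfl⟩ : ∃ s, t = s + 1 := ⟨t - 1, by omega⟩
  ext x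
  constructor
  · rintro ⟨l, rfl⟩
    refine ⟨j + l, ?_⟩
    rw [Nat.mod_mul_mod, mul_assoc, ← pow_add q j l]
  · rintro ⟨l, rfl⟩
    refine ⟨l + s * j, ?_⟩
    rw [Nat.mod_mul_mod]
    have h2 := (h1.pow j).mul_left (i * q ^ l)
    have h3 : i * q ^ j * q ^ (l + s * j) = i * q ^ l * (q ^ (s + 1)) ^ j := by ring
    rw [h3]
    rw [one_pow, mul_one] at h2
    exact h2.symm

open Classical in
noncomputable def auxJ (q t k : ℕ) : Finset ℕ :=
  (Finset.range (q ^ t - 1)).filter (fun i => cycCoset q t i ⊆ Set.Icc 2 (q ^ t - k))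

lemma aux_mem_self {q t i : ℕ} (h : i < q ^ t - 1) : i ∈ cycCoset q t i :=
  ⟨0, by simp [Nat.mod_eq_of_lt h]⟩

lemma aux_count {q t k : ℕ} (hq : 2 ≤ q) (ht : 1 ≤ t) :
    ∑ᶠ C ∈ XiStar q t k, C.ncard = (auxJ q t k).card := by
  have hqt : 2 ≤ q ^ t := le_trans hq (Nat.le_self_pow (by omega) q)
  have hfin : (XiStar q t k).Finite := by
    refine ((Finset.range (q ^ t)).finite_toSet.image (cycCoset q t)).subset ?_
    rintro C ⟨⟨i, hi, rfl⟩, -⟩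
    exact ⟨i, by simp; omega, rfl⟩
  have h := Set.Finite.ncard_biUnion (t := XiStar q t k) hfin (s := fun C => C)
    (fun C hC => (Set.finite_Icc 2 (q ^ t - k)).subset hC.2) (by
      rintro C ⟨⟨i, hi, rfl⟩, -⟩ D ⟨⟨j, hj, rfl⟩, -⟩ hne
      rw [Function.onFun, Set.disjoint_left]
      intro x hx hx'
      exact hne ((aux_coset_eq (by omega) ht hx).symm.trans (aux_coset_eq (by omega) ht hx')))
  rw [← h, ← Set.ncard_coe_finset]
  congr 1
  ext x
  simp only [Set.mem_iUnion, auxJ, Finset.coe_filter, Finset.mem_range, Set.mem_ofPred_eq]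
  constructor
  · rintro ⟨C, ⟨⟨i, hi, rfl⟩, hC⟩, hx⟩
    refine ⟨?_, by rwa [aux_coset_eq (by omega) ht hx]⟩
    obtain ⟨j, rfl⟩ := hx
    exact Nat.mod_lt _ (by omega)
  · rintro ⟨hx, hC⟩
    exact ⟨_, ⟨⟨x, by omega, rfl⟩, hC⟩, aux_mem_self hx⟩

lemma aux_descent {B F X : Type} [Field B] [Finite B] [Field F] [Finite F] [Algebra B F]
    [Finite X]
    (U : Submodule B (X → B)) (V : Submodule F (X → F))
    (h1 : ∀ u ∈ U, (fun x => algebraMap B F (u x)) ∈ V)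
    (h2 : ∀ v ∈ V, ∀ l : F, (fun x => Algebra.trace B F (l * v x)) ∈ U) :
    Module.finrank B U = Module.finrank F V := by
  classical
  have : Module.Finite B F := Module.Finite.of_finite
  have : Module.Finite B U := inferInstance
  let b := Module.finBasis B U
  let g : Fin (Module.finrank B U) → (X → F) := fun i x => algebraMap B F ((b i : X → B) x)
  let e := Module.finBasis B F
  have hli : LinearIndependent F g := by
    rw [Fintype.linearIndependent_iff]
    intro f hf i
    have key : ∀ m, e.repr (f i) m = 0 := by
      intro m
      have hb := Fintype.linearIndependent_iff.1 b.linearIndependent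
        (fun i => e.repr (f i) m) ?_ i
      · exact hb
      · apply Subtype.ext
        funext x
        have hx := congrFun hf x
        have hx2 := congrArg (fun y => e.repr y m) hx
        simp only [g, Finset.sum_apply, Pi.smul_apply, smul_eq_mul, Pi.zero_apply, map_zero,
          Finsupp.zero_apply] at hx2
        have h3 : ∀ i, f i * algebraMap B F ((b i : X → B) x) = ((b i : X → B) x) • f i := by
          intro i; rw [Algebra.smul_def, mul_comm]
        simp only [h3, map_sum, map_smul, Finsupp.coe_finsetSum, Finset.sum_apply,
          Finsupp.smul_apply, smul_eq_mul] at hx2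
        simp only [Submodule.coe_sum, Submodule.coe_smul, Finset.sum_apply, Pi.smul_apply,
          smul_eq_mul, Submodule.coe_zero, Pi.zero_apply]
        rw [← hx2]
        exact Finset.sum_congr rfl fun _ _ => mul_comm _ _
    have : e.repr (f i) = 0 := Finsupp.ext key
    simpa using this
  have hspan : Submodule.span F (Set.range g) = V := by
    apply le_antisymm
    · rw [Submodule.span_le]
      rintro _ ⟨i, rfl⟩
      exact h1 _ (b i).2
    · intro v hv
      have hU : ∀ u ∈ U, (fun x => algebraMap B F (u x)) ∈ Submodule.span F (Set.range g) := by
        intro u hu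
        have hr := b.sum_repr ⟨u, hu⟩
        have : (fun x => algebraMap B F (u x))
            = ∑ i, algebraMap B F (b.repr ⟨u, hu⟩ i) • g i := by
          funext x
          have := congrFun (congrArg Subtype.val hr) x
          simp only [Submodule.coe_sum, Submodule.coe_smul, Finset.sum_apply, Pi.smul_apply,
            smul_eq_mul] at this
          simp only [g, Finset.sum_apply, Pi.smul_apply, smul_eq_mul]
          rw [← this]
          simp
        rw [this]
        exact Submodule.sum_mem _ fun i _ =>
          Submodule.smul_mem _ _ (Submodule.subset_span ⟨i, rfl⟩)
      have hv2 : v = ∑ m, e.traceDual m • (fun x => algebraMap B F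
          (Algebra.trace B F (e m * v x))) := by
        funext x
        have := e.traceDual.sum_repr (v x)
        simp only [Module.Basis.traceDual_repr_apply, Algebra.traceForm_apply] at this
        conv_lhs => rw [← this]
        simp only [Finset.sum_apply, Pi.smul_apply, smul_eq_mul]
        refine Finset.sum_congr rfl fun m _ => ?_
        rw [Algebra.smul_def, mul_comm, mul_comm (v x)]
      rw [hv2]
      exact Submodule.sum_mem _ fun m _ => Submodule.smul_mem _ _ (hU _ (h2 v hv (e m)))
  rw [← hspan, finrank_span_eq_card hli, Fintype.card_fin]

lemma aux_finrankV {F : Type} [Field F] [Fintype F] (J : Finset ℕ)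
    (hJ : ∀ i ∈ J, i < Fintype.card F - 1) :
    Module.finrank F (Submodule.span F
      (Set.range (fun (i : J) (x : Fˣ) => (x : F) ^ (i : ℕ)))) = J.card := by
  classical
  rw [finrank_span_eq_card, Fintype.card_coe]
  rw [Fintype.linearIndependent_iff]
  intro g hg j
  have h0 := congrArg (fun f : Fˣ → F => ∑ x : Fˣ, f x * (x : F) ^ (Fintype.card F - 1 - j)) hg
  simp only [Finset.sum_apply, Pi.smul_apply, smul_eq_mul, Finset.sum_mul, Pi.zero_apply,
    zero_mul, Finset.sum_const_zero] at h0
  rw [Finset.sum_comm] at h0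
  have hj := hJ j j.2
  rw [Finset.sum_eq_single j] at h0
  · simp only [mul_assoc, ← pow_add, ← Finset.mul_sum] at h0
    have := FiniteField.sum_pow_units F (j + (Fintype.card F - 1 - j))
    rw [this, if_pos (by rw [Nat.add_sub_cancel' hj.le])] at h0
    simpa using h0
  · intro i _ hij
    have hi := hJ i i.2
    simp only [mul_assoc, ← pow_add, ← Finset.mul_sum]
    have := FiniteField.sum_pow_units F (i + (Fintype.card F - 1 - j))
    rw [this, if_neg, mul_zero]
    rintro ⟨c, hc⟩
    apply hij
    apply Subtype.ext
    rcases c with _ | _ | c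
    · omega
    · omega
    · exfalso
      have : (Fintype.card F - 1) * (c + 1 + 1) = (Fintype.card F - 1) * c
        + 2 * (Fintype.card F - 1) := by ring
      have h2 : 0 ≤ (Fintype.card F - 1) * c := Nat.zero_le _
      omega
  · simp

/-- Fourier inversion on the multiplicative group. -/
lemma aux_inv {F : Type} [Field F] [Fintype F] [DecidableEq F] (b : Fˣ → F) (y : Fˣ) :
    b y = ∑ i ∈ Finset.range (Fintype.card F - 1),
      (-∑ x : Fˣ, b x * ((x⁻¹ : Fˣ) : F) ^ i) * (y : F) ^ i := by
  classical
  simp only [neg_mul, Finset.sum_neg_distrib, Finset.sum_mul]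
  rw [Finset.sum_comm, Finset.sum_eq_single y]
  · simp [mul_assoc, ← mul_pow]
    rw [Nat.cast_sub Fintype.card_pos]
    simp
  · intro x _ hxy
    simp only [mul_assoc, ← mul_pow, ← Finset.mul_sum]
    rw [← Units.val_mul, geom_sum_eq, ← Units.val_pow_eq_pow_val, ← Fintype.card_units, pow_card_eq_one]
    · simp
    · rw [Ne, Units.val_eq_one, inv_mul_eq_one]
      exact hxy
  · simp

lemma aux_mod {F : Type} [Field F] [Fintype F] (x : Fˣ) (m : ℕ) :
    (x : F) ^ (m % (Fintype.card F - 1)) = (x : F) ^ m := by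
  classical
  rw [← Units.val_pow_eq_pow_val, ← Units.val_pow_eq_pow_val, ← Fintype.card_units, pow_mod_card]

theorem stmt_10 (q t k : ℕ) (hq : ∃ p m : ℕ, p.Prime ∧ 0 < m ∧ q = p ^ m) (ht : 1 ≤ t)
    (hk2 : 2 ≤ k) (hk : k ≤ q ^ t)
    (B F : Type) [Field B] [Fintype B] [Field F] [Fintype F] [Algebra B F]
    (hB : Fintype.card B = q) (hrank : Module.finrank B F = t)
    (hF : Fintype.card F = q ^ t) :
    ∀ W : Submodule B (F → F), (W : Set (F → F)) = WkSet B F k →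
      Module.finrank B W = ∑ᶠ C ∈ XiStar q t k, C.ncard := by
  classical
  intro W hW
  have hW' : ∀ c, c ∈ W ↔ c ∈ WkSet B F k := fun c => by rw [← hW]; rfl
  have hq2 : 2 ≤ q := by rw [← hB]; exact Fintype.one_lt_card
  have hqt : 2 ≤ q ^ t := le_trans hq2 (Nat.le_self_pow (by omega) q)
  rw [aux_count hq2 ht]
  have hJlt : ∀ i ∈ auxJ q t k, i < Fintype.card F - 1 := by
    intro i hi
    rw [hF]
    simpa using (Finset.mem_filter.1 hi).1
  have hJ2 : ∀ i ∈ auxJ q t k, i ∈ Set.Icc 2 (q ^ t - k) := by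
    intro i hi
    exact (Finset.mem_filter.1 hi).2 (aux_mem_self (hF ▸ hJlt i hi))
  have hJq : ∀ i ∈ auxJ q t k, ∀ j, i * q ^ j % (q ^ t - 1) ∈ auxJ q t k := by
    intro i hi j
    refine Finset.mem_filter.2 ⟨Finset.mem_range.2 (Nat.mod_lt _ (by omega)), ?_⟩
    rw [aux_coset_eq (by omega) ht ⟨j, rfl⟩]
    exact (Finset.mem_filter.1 hi).2
  set V := Submodule.span F
      (Set.range (fun (i : auxJ q t k) (x : Fˣ) => (x : F) ^ (i : ℕ))) with hV
  rw [← aux_finrankV (auxJ q t k) hJlt, ← hV]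
  let psi : (Fˣ → B) →ₗ[B] (F → F) :=
    { toFun := fun u a => if h : a = 0 then 0 else a⁻¹ * algebraMap B F (u (Units.mk0 a h))
      map_add' := by
        intro u v; funext a
        by_cases h : a = 0 <;> simp [h, mul_add]
      map_smul' := by
        intro r u; funext a
        by_cases h : a = 0
        · simp [h]
        · simp [h, Algebra.smul_def, mul_left_comm] }
  have hpsi0 : ∀ u, psi u 0 = 0 := by intro u; simp [psi]
  have hpsi : ∀ u (x : Fˣ), (x : F) * psi u x = algebraMap B F (u x) := by
    intro u x; simp [psi]
  have hpsi_inj : Function.Injective psi := by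
    intro u v huv
    funext x
    apply (algebraMap B F).injective
    rw [← hpsi, ← hpsi, huv]
  have hmap : W = (W.comap psi).map psi := by
    apply le_antisymm
    · intro c hc
      obtain ⟨h1, h2, h3⟩ := (hW' c).1 hc
      choose u hu using fun x : Fˣ => h3 x x.ne_zero
      have : psi u = c := by
        funext a
        by_cases h : a = 0
        · subst h; rw [hpsi0, h2]
        · apply mul_left_cancel₀ h
          exact (hpsi u (Units.mk0 a h)).trans (hu (Units.mk0 a h)).symm
      exact ⟨u, by simpa [this] using hc, this⟩
    · exact Submodule.map_comap_le _ _
  rw [hmap, ← (Submodule.equivMapOfInjective psi hpsi_inj (W.comap psi)).finrank_eq]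
  have hsum : ∀ f : F → F, f 0 = 0 → ∑ a : F, f a = ∑ x : Fˣ, f x := by
    intro f hf
    rw [← Fintype.sum_subtype_add_sum_subtype (fun a : F => a ≠ 0)]
    have : ∑ a : {a : F // ¬ a ≠ 0}, f a = 0 :=
      Finset.sum_eq_zero fun a _ => by rw [not_not.1 a.2, hf]
    rw [this, add_zero]
    exact (Fintype.sum_equiv unitsEquivNeZero _ _ (fun x => by simp)).symm
  apply aux_descent
  · intro u hu
    obtain ⟨h1, -, -⟩ := (hW' _).1 (Submodule.mem_comap.1 hu)
    set b : Fˣ → F := fun x => algebraMap B F (u x) with hb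
    let a : ℕ → F := fun i => -∑ x : Fˣ, b x * ((x⁻¹ : Fˣ) : F) ^ i
    have ha0 : ∀ d i, d < k → (q ^ t - 1) ∣ (i + d - 1) → 1 ≤ i + d → a i = 0 := by
      intro d i hd hdvd hid
      have h := h1 (Polynomial.X ^ d) (by
        rw [Polynomial.degree_X_pow]; exact_mod_cast hd)
      rw [hsum _ (by simp [hpsi0])] at h
      simp only [a, neg_eq_zero]
      rw [← h]
      refine Finset.sum_congr rfl fun x _ => ?_
      rw [hb]
      simp only [← hpsi, Polynomial.eval_pow, Polynomial.eval_X]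
      obtain ⟨c, hc⟩ := hdvd
      have hx : x ^ (i + d) = x := by
        rw [show i + d = (q ^ t - 1) * c + 1 by omega, pow_succ, pow_mul, ← hF,
          ← Fintype.card_units, pow_card_eq_one]
        simp
      have hx2 : x * x⁻¹ ^ i = x ^ d := by
        rw [inv_pow, mul_inv_eq_iff_eq_mul, ← pow_add, add_comm, hx]
      have hx3 := congrArg (Units.val) hx2
      simp only [Units.val_mul, Units.val_pow_eq_pow_val] at hx3
      rw [← hx3]
      ring
    have haq : ∀ i j, a (i * q ^ j % (q ^ t - 1)) = a i ^ (q ^ j) := by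
      intro i j
      have hfr : ∀ y : F, y ^ (q ^ j) = ((FiniteField.frobeniusAlgHom B F) ^ j) y := by
        intro y
        rw [AlgHom.coe_pow, FiniteField.coe_frobeniusAlgHom, pow_iterate, hB]
      rw [hfr]
      simp only [a, map_neg, map_sum, map_mul]
      congr 1
      refine Finset.sum_congr rfl fun x _ => ?_
      rw [← hF, aux_mod, ← hfr, ← hfr, pow_mul]
      congr 1
      rw [hfr, hb, AlgHom.commutes]
    have haJ : ∀ i < q ^ t - 1, i ∉ auxJ q t k → a i = 0 := by
      intro i hi hiJ
      have : ¬ cycCoset q t i ⊆ Set.Icc 2 (q ^ t - k) := fun h =>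
        hiJ (Finset.mem_filter.2 ⟨Finset.mem_range.2 hi, h⟩)
      obtain ⟨_, ⟨j, rfl⟩, hj⟩ := Set.not_subset.1 this
      have hlt : i * q ^ j % (q ^ t - 1) < q ^ t - 1 := Nat.mod_lt _ (by omega)
      have h0 : a (i * q ^ j % (q ^ t - 1)) = 0 := by
        generalize i * q ^ j % (q ^ t - 1) = i' at *
        rw [Set.mem_Icc] at hj
        by_cases c0 : i' = 0
        · subst c0; exact ha0 1 0 (by omega) (by simp) (by omega)
        by_cases c1 : i' = 1
        · subst c1; exact ha0 0 1 (by omega) (by simp) (by omega)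
        exact ha0 (q ^ t - i') i' (by omega)
          (by rw [show i' + (q ^ t - i') - 1 = q ^ t - 1 by omega]) (by omega)
      rw [haq] at h0
      exact pow_eq_zero_iff (by positivity) |>.1 h0
    have hbsum : b = ∑ i ∈ (auxJ q t k).attach, a i • (fun x : Fˣ => (x : F) ^ (i : ℕ)) := by
      funext y
      rw [aux_inv b y, Finset.sum_apply]
      simp only [Pi.smul_apply, smul_eq_mul]
      rw [Finset.sum_attach (auxJ q t k) (fun i => a i * (y : F) ^ i)]
      symm
      refine Finset.sum_subset (fun i hi => Finset.mem_range.2 (hJlt i hi)) ?_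
      intro i hi hiJ
      rw [haJ i (hF ▸ Finset.mem_range.1 hi) hiJ, zero_mul]
    rw [hbsum]
    exact Submodule.sum_mem _ fun i _ =>
      Submodule.smul_mem _ _ (Submodule.subset_span ⟨i, rfl⟩)
  · intro v hv l
    -- closure of V under powers
    have hVl : ∀ v ∈ V, ∀ j, (fun x => v x ^ (q ^ j)) ∈ V := by
      intro v hv j
      have hfr : ∀ y : F, y ^ (q ^ j) = ((FiniteField.frobeniusAlgHom B F) ^ j) y := by
        intro y
        rw [AlgHom.coe_pow, FiniteField.coe_frobeniusAlgHom, pow_iterate, hB]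
      induction hv using Submodule.span_induction with
      | mem v hv =>
        obtain ⟨i, rfl⟩ := hv
        refine Submodule.subset_span ⟨⟨_, hJq i i.2 j⟩, ?_⟩
        funext x
        simp only
        rw [← hF, aux_mod, pow_mul]
      | zero => 
        have : (fun x : Fˣ => (0 : Fˣ → F) x ^ (q ^ j)) = 0 := by
          funext x; simp only [hfr, Pi.zero_apply, map_zero]
        rw [this]; exact Submodule.zero_mem _
      | add v w _ _ h1 h2 =>
        have : (fun x : Fˣ => (v + w) x ^ (q ^ j))
            = (fun x => v x ^ (q ^ j)) + (fun x => w x ^ (q ^ j)) := by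
          funext x; simp only [hfr, Pi.add_apply, map_add]
        rw [this]; exact Submodule.add_mem _ h1 h2
      | smul r v _ h1 =>
        have : (fun x : Fˣ => (r • v) x ^ (q ^ j)) = r ^ (q ^ j) • (fun x => v x ^ (q ^ j)) := by
          funext x; simp only [Pi.smul_apply, smul_eq_mul, mul_pow]
        rw [this]; exact Submodule.smul_mem _ _ h1
    have htr : (fun x => algebraMap B F (Algebra.trace B F (l * v x))) ∈ V := by
      have : (fun x => algebraMap B F (Algebra.trace B F (l * v x)))
          = ∑ j ∈ Finset.range t, (fun x => (l • v) x ^ (q ^ j)) := by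
        funext x
        rw [FiniteField.algebraMap_trace_eq_sum_pow, Finset.sum_apply, hrank, Nat.card_eq_fintype_card, hB]
        rfl
      rw [this]
      exact Submodule.sum_mem _ fun j _ => hVl _ (Submodule.smul_mem _ _ hv) j
    have hort : ∀ w ∈ V, ∀ d < k, ∑ x : Fˣ, ((x⁻¹ : Fˣ) : F) * w x * (x : F) ^ d = 0 := by
      intro w hw d hd
      induction hw using Submodule.span_induction with
      | mem v hv =>
        obtain ⟨i, rfl⟩ := hv
        obtain ⟨hi1, hi2⟩ := hJ2 i i.2
        have h := FiniteField.sum_pow_lt_card_sub_one F (i - 1 + d) (by omega)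
        rw [hsum _ (by rw [zero_pow]; omega)] at h
        rw [← h]
        refine Finset.sum_congr rfl fun x _ => ?_
        obtain ⟨m, hm⟩ : ∃ m, (i : ℕ) = m + 1 := ⟨i - 1, by omega⟩
        simp only [hm, pow_add, Nat.add_sub_cancel]
        have hx := x.ne_zero
        simp
        field_simp
      | zero => simp
      | add v w _ _ h1 h2 =>
        simp only [Pi.add_apply, mul_add, add_mul, Finset.sum_add_distrib, h1, h2, add_zero]
      | smul r v _ h1 =>
        simp only [Pi.smul_apply, smul_eq_mul]
        have : ∀ x : Fˣ, ((x⁻¹ : Fˣ) : F) * (r * v x) * (x : F) ^ d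
          = r * (((x⁻¹ : Fˣ) : F) * v x * (x : F) ^ d) := fun x => by ring
        simp only [this, ← Finset.mul_sum, h1, mul_zero]
    rw [Submodule.mem_comap, hW']
    set u : Fˣ → B := fun x => Algebra.trace B F (l * v x) with hu
    refine ⟨?_, hpsi0 _, ?_⟩
    · intro f hf
      have hpx : ∀ x : Fˣ, psi u x = ((x⁻¹ : Fˣ) : F) * algebraMap B F (u x) := by
        intro x; simp [psi]
      rw [hsum _ (by rw [hpsi0, zero_mul])]
      simp only [hpx, Polynomial.eval_eq_sum, Polynomial.sum_def, Finset.mul_sum]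
      rw [Finset.sum_comm]
      refine Finset.sum_eq_zero fun d hd => ?_
      have hdk : d < k := by
        have := (Polynomial.le_degree_of_mem_supp d hd).trans_lt hf
        exact_mod_cast this
      have := hort _ htr d hdk
      have h3 : ∀ x : Fˣ, ((x⁻¹ : Fˣ) : F) * algebraMap B F (u x) * (f.coeff d * (x : F) ^ d)
          = f.coeff d * (((x⁻¹ : Fˣ) : F) * algebraMap B F (u x) * (x : F) ^ d) := fun x => by ring
      simp only [h3, ← Finset.mul_sum]
      rw [this, mul_zero]
    · intro a ha
      exact ⟨u (Units.mk0 a ha), hpsi u (Units.mk0 a ha)⟩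
end

section
/- For k = 1 and q^t ≥ 3, the dimension of W_1 as a vector space over B equals q^t − 1 − t. -/
open Classical in
/-- Parametrisation of the vectors satisfying (ii) and (iii). -/
noncomputable def Emap (B F : Type) [Field B] [Field F] [Algebra B F] :
    (Fˣ → B) →ₗ[B] (F → F) where
  toFun b α := if h : α = 0 then 0 else b (Units.mk0 α h) • α⁻¹
  map_add' b c := by
    funext α
    by_cases h : α = 0 <;> simp [h, add_smul]
  map_smul' r b := by
    funext α
    by_cases h : α = 0 <;> simp [h, mul_smul]

lemma Emap_zero (B F : Type) [Field B] [Field F] [Algebra B F] (b : Fˣ → B) :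
    Emap B F b 0 = 0 := by simp [Emap]

lemma Emap_unit (B F : Type) [Field B] [Field F] [Algebra B F] (b : Fˣ → B) (u : Fˣ) :
    Emap B F b (u : F) = b u • (u : F)⁻¹ := by simp [Emap]

lemma Emap_inj (B F : Type) [Field B] [Field F] [Algebra B F] :
    Function.Injective (Emap B F) := by
  intro b c h
  funext u
  have h1 := congrFun h (u : F)
  rw [Emap_unit, Emap_unit] at h1
  exact smul_left_injective B (inv_ne_zero u.ne_zero) h1

theorem stmt_11 (q t : ℕ) (hq : ∃ p m : ℕ, p.Prime ∧ 0 < m ∧ q = p ^ m) (ht : 1 ≤ t)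
    (hqt : 3 ≤ q ^ t)
    (B F : Type) [Field B] [Fintype B] [Field F] [Fintype F] [Algebra B F]
    (hB : Fintype.card B = q) (hrank : Module.finrank B F = t)
    (hF : Fintype.card F = q ^ t) :
    ∀ W : Submodule B (F → F), (W : Set (F → F)) = WkSet B F 1 →
      Module.finrank B W = q ^ t - 1 - t := by
  classical
  intro W hW
  let L : (Fˣ → B) →ₗ[B] F := Fintype.linearCombination B (fun u : Fˣ => (u : F)⁻¹)
  have hL : ∀ b, L b = ∑ α : F, Emap B F b α := by
    intro b
    rw [Fintype.linearCombination_apply]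
    refine Fintype.sum_of_injective (fun u : Fˣ => (u : F)) Units.val_injective _ _ ?_ ?_
    · intro α hα
      have : α = 0 := by
        by_contra h
        exact hα ⟨Units.mk0 α h, rfl⟩
      rw [this, Emap_zero]
    · intro u
      rw [Emap_unit]
  have hsurj : LinearMap.range L = ⊤ := by
    rw [LinearMap.range_eq_top]
    intro x
    by_cases hx : x = 0
    · exact ⟨0, by simp [hx]⟩
    · refine ⟨Pi.single (Units.mk0 x hx)⁻¹ 1, ?_⟩
      simp [L, Fintype.linearCombination_apply_single]
  have hWE : W = (LinearMap.ker L).map (Emap B F) := by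
    ext c
    rw [← SetLike.mem_coe, hW, Submodule.mem_map]
    constructor
    · rintro ⟨h1, h2, h3⟩
      choose g hg using fun u : Fˣ => h3 u u.ne_zero
      have hc : Emap B F g = c := by
        funext α
        by_cases h : α = 0
        · rw [h, Emap_zero, h2]
        · have h4 := Emap_unit B F g (Units.mk0 α h)
          have h5 := hg (Units.mk0 α h)
          simp only [Units.val_mk0] at h4 h5
          rw [h4, Algebra.smul_def, ← h5]
          field_simp
      refine ⟨g, ?_, hc⟩
      rw [LinearMap.mem_ker, hL, hc]
      simpa using h1 1 (by simp)
    · rintro ⟨b, hb, rfl⟩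
      rw [LinearMap.mem_ker, hL] at hb
      refine ⟨?_, Emap_zero B F b, ?_⟩
      · intro f hf
        have hf0 : f.degree ≤ 0 := by
          rw [← Polynomial.natDegree_eq_zero_iff_degree_le_zero]
          by_cases h0 : f = 0
          · simp [h0]
          · have := (Polynomial.natDegree_lt_iff_degree_lt h0).mpr hf
            omega
        rw [Polynomial.eq_C_of_degree_le_zero hf0]
        simp only [Polynomial.eval_C]
        rw [← Finset.sum_mul, hb, zero_mul]
      · intro α hα
        refine ⟨b (Units.mk0 α hα), ?_⟩
        have h4 := Emap_unit B F b (Units.mk0 α hα)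
        simp only [Units.val_mk0] at h4
        rw [h4, Algebra.smul_def]
        field_simp
  have hr := LinearMap.finrank_range_add_finrank_ker L
  rw [hsurj, finrank_top, hrank, Module.finrank_fintype_fun_eq_card, Fintype.card_units, hF] at hr
  rw [hWE, ← (Submodule.equivMapOfInjective (Emap B F) (Emap_inj B F) (LinearMap.ker L)).finrank_eq]
  omega
end

section
/- Fix k with 1 ≤ k ≤ q^t. A vector c = (c_α)_{α∈F} belongs to W_k if and only if there exists a polynomial h ∈ F[X] with deg h < q^t − k such that h(0) = 0, α·h(α) ∈ B for every α ∈ F \ {0}, and c_α = h(α) for every α ∈ F. -/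
open Polynomial in
theorem aux_sum_s12 {F : Type} [Field F] [Fintype F] (p : F[X])
    (hp : p.natDegree < Fintype.card F) :
    ∑ x : F, p.eval x = - p.coeff (Fintype.card F - 1) := by
  classical
  have hN : 1 < Fintype.card F := Fintype.one_lt_card
  have htop : ∑ x : F, x ^ (Fintype.card F - 1) = -1 := by
    have h1 : ∀ x : F, x ^ (Fintype.card F - 1) = 1 - (if x = 0 then 1 else 0) := by
      intro x
      by_cases hx : x = 0
      · subst hx
        rw [zero_pow (by omega)]; simp
      · rw [FiniteField.pow_card_sub_one_eq_one x hx]; simp [hx]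
    simp only [h1, Finset.sum_sub_distrib]
    simp
  simp only [eval_eq_sum_range' hp]
  rw [Finset.sum_comm]
  simp only [← Finset.mul_sum]
  rw [Finset.sum_eq_single (Fintype.card F - 1), htop]
  · ring
  · intro b hb hne
    rw [Finset.mem_range] at hb
    rw [FiniteField.sum_pow_lt_card_sub_one F b (by omega), mul_zero]
  · intro h
    exact absurd (Finset.mem_range.2 (by omega)) h

theorem stmt_12 (q t k : ℕ) (hq : ∃ p m : ℕ, p.Prime ∧ 0 < m ∧ q = p ^ m) (ht : 1 ≤ t)
    (hk1 : 1 ≤ k) (hk : k ≤ q ^ t)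
    (B F : Type) [Field B] [Fintype B] [Field F] [Fintype F] [Algebra B F]
    (hB : Fintype.card B = q) (hrank : Module.finrank B F = t)
    (hF : Fintype.card F = q ^ t)
    (c : F → F) :
    c ∈ WkSet B F k ↔
      ∃ h : Polynomial F, h.degree < ((q ^ t - k : ℕ) : WithBot ℕ) ∧
        h.eval 0 = 0 ∧
        (∀ α : F, α ≠ 0 → ∃ b : B, α * h.eval α = algebraMap B F b) ∧
        ∀ α : F, c α = h.eval α := by
  rw [← hF] at hk ⊢
  have hN : 1 < Fintype.card F := Fintype.one_lt_card
  constructor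
  · rintro ⟨h1, h2, h3⟩
    classical
    obtain ⟨h, hdeg, hev⟩ : ∃ h : Polynomial F, h.degree < (Fintype.card F : WithBot ℕ) ∧
        ∀ α, c α = h.eval α := by
      refine ⟨Lagrange.interpolate Finset.univ id c, ?_, ?_⟩
      · exact Lagrange.degree_interpolate_lt c (Function.injective_id.injOn)
      · intro α
        exact (Lagrange.eval_interpolate_at_node c (v := id)
          (Function.injective_id.injOn) (Finset.mem_univ α)).symm
    refine ⟨h, ?_, by rw [← hev, h2], ?_, hev⟩
    · by_cases h0 : h = 0
      · subst h0; simp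
      by_contra hcon
      rw [Polynomial.degree_eq_natDegree h0, Nat.cast_lt] at hcon hdeg
      have hs := h1 (Polynomial.X ^ (Fintype.card F - 1 - h.natDegree)) (by
        rw [Polynomial.degree_X_pow, Nat.cast_lt]; omega)
      simp only [hev, ← Polynomial.eval_mul] at hs
      rw [aux_sum_s12 _ (by
        rw [Polynomial.natDegree_mul_X_pow _ h0]; omega)] at hs
      have he : Fintype.card F - 1 =
          h.natDegree + (Fintype.card F - 1 - h.natDegree) := by omega
      rw [Polynomial.coeff_mul_X_pow', if_pos (by omega), show
        Fintype.card F - 1 - (Fintype.card F - 1 - h.natDegree) = h.natDegree by omega,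
        neg_eq_zero] at hs
      exact h0 (Polynomial.leadingCoeff_eq_zero.1 hs)
    · intro α hα
      rw [← hev]; exact h3 α hα
  · rintro ⟨h, hdeg, h0, hB', hev⟩
    refine ⟨?_, by rw [hev, h0], fun α hα => by rw [hev]; exact hB' α hα⟩
    intro f hf
    simp only [hev, ← Polynomial.eval_mul]
    by_cases hz : h = 0
    · simp [hz]
    by_cases fz : f = 0
    · simp [fz]
    rw [Polynomial.degree_eq_natDegree hz, Nat.cast_lt] at hdeg
    rw [Polynomial.degree_eq_natDegree fz, Nat.cast_lt] at hf
    have hm := Polynomial.natDegree_mul hz fz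
    rw [aux_sum_s12 _ (by omega), Polynomial.coeff_eq_zero_of_natDegree_lt (by omega), neg_zero]
end

section
/- Fix k with 1 ≤ k ≤ q^t, and suppose w_1, …, w_d ∈ W_k are linearly independent over B. Then there exists a set I ⊆ F \ {0} with |I| = d and coefficients M(α,β) ∈ B (for α ∈ I and β ∈ F \ ({0} ∪ I)) such that for every f ∈ F[X] with deg f < k and every α ∈ I: Tr(f(α)/α) = Σ_{β ∈ F \ ({0} ∪ I)} M(α,β) · Tr(f(β)/β). -/
theorem stmt_13 (q t k d : ℕ) (hq : ∃ p m : ℕ, p.Prime ∧ 0 < m ∧ q = p ^ m) (ht : 1 ≤ t)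
    (hk1 : 1 ≤ k) (hk : k ≤ q ^ t)
    (B F : Type) [Field B] [Fintype B] [Field F] [Fintype F] [DecidableEq F] [Algebra B F]
    (hB : Fintype.card B = q) (hrank : Module.finrank B F = t)
    (hF : Fintype.card F = q ^ t)
    (w : Fin d → (F → F)) (hw : ∀ i, w i ∈ WkSet B F k)
    (hli : LinearIndependent B w) :
    ∃ I : Finset F, (0 : F) ∉ I ∧ I.card = d ∧
      ∃ M : F → F → B,
        ∀ f : Polynomial F, f.degree < (k : WithBot ℕ) →
          ∀ α ∈ I,
            Algebra.trace B F (f.eval α / α) =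
              ∑ β ∈ Finset.univ \ insert (0 : F) I,
                M α β * Algebra.trace B F (f.eval β / β) := by
  classical
  have hex : ∀ i α, ∃ b : B, α * w i α = algebraMap B F b := by
    intro i α
    by_cases h : α = 0
    · exact ⟨0, by simp [h]⟩
    · exact (hw i).2.2 α h
  choose v hv using hex
  have hinj : Function.Injective (algebraMap B F) := (algebraMap B F).injective
  have hv0 : ∀ i, v i 0 = 0 := by
    intro i
    apply hinj
    rw [← hv i 0]; simp
  have hwv : ∀ i α, w i α = v i α • α⁻¹ := by
    intro i α
    by_cases h : α = 0
    · subst h; simp [(hw i).2.1]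
    · rw [Algebra.smul_def, ← hv i α]; field_simp
  have hvli : LinearIndependent B v := by
    rw [Fintype.linearIndependent_iff] at hli ⊢
    intro c hc
    apply hli c
    funext α
    have h1 : ∑ i, c i * v i α = 0 := by
      have := congrFun hc α
      simpa [Finset.sum_apply] using this
    have h2 : ∑ i, c i • w i α = (∑ i, c i * v i α) • α⁻¹ := by
      rw [Finset.sum_smul]
      refine Finset.sum_congr rfl fun i _ => ?_
      rw [hwv, smul_smul]
    rw [h1, zero_smul] at h2
    simpa [Finset.sum_apply] using h2
  have hpar : ∀ f : Polynomial F, f.degree < (k : WithBot ℕ) → ∀ i,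
      ∑ β, Algebra.trace B F (f.eval β / β) * v i β = 0 := by
    intro f hf i
    have h := congrArg (Algebra.trace B F) ((hw i).1 f hf)
    rw [map_sum, map_zero] at h
    rw [← h]
    refine Finset.sum_congr rfl fun β _ => ?_
    rw [hwv, smul_mul_assoc, map_smul, smul_eq_mul, mul_comm, div_eq_mul_inv, mul_comm β⁻¹]
  let A : Matrix (Fin d) F B := Matrix.of v
  let col : F → (Fin d → B) := fun β i => v i β
  have hspan : Submodule.span B (Set.range col) = ⊤ := by
    apply Submodule.eq_top_of_finrank_eq
    have h1 : A.rank = d := by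
      have := LinearIndependent.rank_matrix (M := A) hvli
      simpa using this
    rw [Matrix.rank_eq_finrank_span_cols] at h1
    rw [Module.finrank_fin_fun]
    exact h1
  obtain ⟨κ, g, hg, hgs, hgli⟩ := exists_linearIndependent' B col
  have : Finite κ := Finite.of_injective g hg
  have := Fintype.ofFinite κ
  let b : Module.Basis κ B (Fin d → B) := Module.Basis.mk hgli (by rw [hgs, hspan])
  have hb : ∀ j, b j = col (g j) := fun j => by simp [b]
  have hκ : Fintype.card κ = d := by
    have := Module.finrank_eq_card_basis b
    rw [Module.finrank_fin_fun] at this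
    exact this.symm
  have hI0 : (0 : F) ∉ Finset.univ.image g := by
    intro h
    obtain ⟨j, -, hj⟩ := Finset.mem_image.1 h
    apply b.ne_zero j
    rw [hb, hj]
    funext i
    exact hv0 i
  refine ⟨Finset.univ.image g, hI0, ?_, ?_⟩
  · rw [Finset.card_image_of_injective _ hg, Finset.card_univ, hκ]
  have key : ∀ α, ∃ m : F → B, α ∈ Finset.univ.image g →
      ∀ f : Polynomial F, f.degree < (k : WithBot ℕ) →
      Algebra.trace B F (f.eval α / α) = ∑ β ∈ Finset.univ \ insert (0 : F) (Finset.univ.image g),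
                m β * Algebra.trace B F (f.eval β / β) := by
    intro α
    by_cases hα : α ∈ Finset.univ.image g
    swap
    · exact ⟨0, fun h => absurd h hα⟩
    obtain ⟨j, -, rfl⟩ := Finset.mem_image.1 hα
    refine ⟨fun β => - b.coord j (col β), fun _ f hf => ?_⟩
    have hz : ∑ β, Algebra.trace B F (f.eval β / β) • col β = 0 := by
      funext i
      simpa [Finset.sum_apply, col] using hpar f hf i
    have h := congrArg (b.coord j) hz
    rw [map_sum, map_zero, ← Finset.sum_sdiff (Finset.subset_univ (insert 0 (Finset.univ.image g))),
      Finset.sum_insert hI0, Finset.sum_image (fun x _ y _ h => hg h)] at h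
    have h3 : ∑ l, b.coord j (Algebra.trace B F (f.eval (g l) / g l) • col (g l))
        = Algebra.trace B F (f.eval (g j) / g j) := by
      rw [Finset.sum_eq_single j]
      · rw [← hb]; simp
      · intro l _ hl
        rw [← hb]; simp [hl]
      · simp
    rw [h3] at h
    simp only [div_zero, map_zero, zero_smul, zero_add] at h
    rw [eq_neg_of_add_eq_zero_right h, ← Finset.sum_neg_distrib]
    refine Finset.sum_congr rfl fun β _ => ?_
    rw [map_smul, smul_eq_mul]; ring
  choose M hM using key
  exact ⟨M, fun f hf α hα => hM α hα f hf⟩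
end
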